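/- arXiv:1311.0021 — 6 statements merged into one kernel-verified Lean document; each statement's English description precedes it below -/
import Mathlib

section
/- For every real number a > 0 there exist constants c₀ > 0 and x₀ > 0 (depending only on a) such that for all real x ≥ x₀ one has ∑_{n=0}^{∞} xⁿ/(n!)^a ≤ 2·exp(c₀·x^{1/a}). -/
open scoped Nat

/-- Each term satisfies `xⁿ/(n!)^a ≤ exp(a·x^{1/a})`, since `yⁿ/n! ≤ exp y` for `y = x^{1/a}`. -/
theorem pow_div_factorial_rpow_le_exp {a x : ℝ} (ha : 0 < a) (hx : 0 ≤ x) (n : ℕ) :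
    x ^ n / (n ! : ℝ) ^ a ≤ Real.exp (a * x ^ (1 / a)) := by
  have hy : 0 ≤ x ^ (1 / a) := Real.rpow_nonneg hx _
  have hpow : ((x ^ (1 / a)) ^ n) ^ a = x ^ n := by
    rw [← Real.rpow_pow_comm hy, ← Real.rpow_mul hx, one_div_mul_cancel ha.ne', Real.rpow_one]
  have h := Real.rpow_le_rpow (by positivity) (Real.pow_div_factorial_le_exp _ hy n) ha.le
  rwa [Real.div_rpow (by positivity) (by positivity), hpow, ← Real.exp_mul, mul_comm] at h

/-- For every real `a > 0` there exist constants `c₀ > 0` and `x₀ > 0` (depending only on `a`)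
such that for all real `x ≥ x₀` one has `∑_{n=0}^∞ xⁿ/(n!)^a ≤ 2·exp(c₀·x^{1/a})`. -/
theorem stmt_0 (a : ℝ) (ha : 0 < a) :
    ∃ c₀ : ℝ, 0 < c₀ ∧ ∃ x₀ : ℝ, 0 < x₀ ∧ ∀ x : ℝ, x₀ ≤ x →
      ∑' n : ℕ, x ^ n / (n ! : ℝ) ^ a ≤ 2 * Real.exp (c₀ * x ^ (1 / a)) := by
  refine ⟨a * 2 ^ (1 / a), by positivity, 1, one_pos, fun x hx => ?_⟩
  have hx0 : 0 ≤ x := zero_le_one.trans hx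
  have hgeom := hasSum_geometric_two.mul_right (Real.exp (a * 2 ^ (1 / a) * x ^ (1 / a)))
  have hle (n : ℕ) : x ^ n / (n ! : ℝ) ^ a ≤
      (1 / 2) ^ n * Real.exp (a * 2 ^ (1 / a) * x ^ (1 / a)) := by
    have h := pow_div_factorial_rpow_le_exp ha (mul_nonneg zero_le_two hx0) n
    rw [Real.mul_rpow zero_le_two hx0, ← mul_assoc] at h
    calc x ^ n / (n ! : ℝ) ^ a = (1 / 2) ^ n * ((2 * x) ^ n / (n ! : ℝ) ^ a) := by
          rw [← mul_div_assoc, ← mul_pow]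
          congr 2
          ring
      _ ≤ _ := by gcongr
  have hsum := Summable.of_nonneg_of_le (fun n => by positivity) hle hgeom.summable
  exact hasSum_le hle hsum.hasSum hgeom
end

section
/- For every real h > -1 there exists a constant c₁ > 0 (depending only on h) such that for every integer n ≥ 1 and every t > 0, ∫_{{0 < t₁ < ⋯ < t_n < t}} (t - t_n)^h · ∏_{j=1}^{n-1} (t_{j+1} - t_j)^h dt₁⋯dt_n ≤ c₁ⁿ · t^{(1+h)n} / (n!)^{1+h}. -/
open MeasureTheory
open scoped Nat

/-- The open simplex `{0 < s₁ < ⋯ < s_n < t}`. -/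
def orderedSimplex (n : ℕ) (t : ℝ) : Set (Fin n → ℝ) :=
  {s | StrictMono s ∧ ∀ i, 0 < s i ∧ s i < t}

/-- The product of the `h`-th powers of the increments of `(s₁, …, s_n, t)`. -/
noncomputable def incrementProd (h : ℝ) {n : ℕ} (s : Fin n → ℝ) (t : ℝ) : ℝ :=
  ∏ j : Fin n, (Fin.snoc (α := fun _ => ℝ) s t j.succ -
    Fin.snoc (α := fun _ => ℝ) s t j.castSucc) ^ h

lemma measurableSet_orderedSimplex (n : ℕ) (t : ℝ) : MeasurableSet (orderedSimplex n t) := by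
  have hset : orderedSimplex n t =
      (⋂ i, ⋂ j, ⋂ _ : i < j, {s : Fin n → ℝ | s i < s j}) ∩
        ⋂ i, ({s | 0 < s i} ∩ {s | s i < t}) := by
    ext s
    simp [orderedSimplex, StrictMono]
  rw [hset]
  refine .inter (.iInter fun i => .iInter fun j => .iInter fun _ => ?_)
    (.iInter fun i => .inter ?_ ?_)
  · exact measurableSet_lt (measurable_pi_apply i) (measurable_pi_apply j)
  · exact measurableSet_lt measurable_const (measurable_pi_apply i)
  · exact measurableSet_lt (measurable_pi_apply i) measurable_const

lemma incrementProd_snoc (h : ℝ) {n : ℕ} (s : Fin n → ℝ) (x t : ℝ) :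
    incrementProd h (Fin.snoc (α := fun _ => ℝ) s x) t = (t - x) ^ h * incrementProd h s x := by
  rw [incrementProd, Fin.prod_univ_castSucc, mul_comm, incrementProd]
  congr 1
  · rw [Fin.succ_last, Fin.snoc_last, Fin.snoc_castSucc, Fin.snoc_last]
  · refine Finset.prod_congr rfl fun j _ => ?_
    rw [Fin.succ_castSucc, Fin.snoc_castSucc, Fin.snoc_castSucc]

lemma snoc_mem_orderedSimplex {n : ℕ} {s : Fin n → ℝ} {x t : ℝ}
    (hs : Fin.snoc (α := fun _ => ℝ) s x ∈ orderedSimplex (n + 1) t) :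
    x ∈ Set.Ioo 0 t ∧ s ∈ orderedSimplex n x := by
  obtain ⟨hmono, hbd⟩ := hs
  refine ⟨by simpa using hbd (Fin.last n), fun i j hij => ?_, fun i => ⟨?_, ?_⟩⟩
  · simpa using hmono (Fin.castSucc_lt_castSucc_iff.2 hij)
  · simpa using (hbd i.castSucc).1
  · simpa using hmono (Fin.castSucc_lt_last i)

lemma lintegral_orderedSimplex_succ_le (h : ℝ) (n : ℕ) (t : ℝ) :
    ∫⁻ s in orderedSimplex (n + 1) t, ENNReal.ofReal (incrementProd h s t) ≤
      ∫⁻ x in Set.Ioo 0 t, ENNReal.ofReal ((t - x) ^ h) *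
        ∫⁻ s in orderedSimplex n x, ENNReal.ofReal (incrementProd h s x) := by
  let e := MeasurableEquiv.piFinSuccAbove (fun _ : Fin (n + 1) => ℝ) (Fin.last n)
  have he : MeasurePreserving e.symm :=
    (volume_preserving_piFinSuccAbove (fun _ : Fin (n + 1) => ℝ) (Fin.last n)).symm
  have he_apply (x : ℝ) (s : Fin n → ℝ) : e.symm (x, s) = Fin.snoc (α := fun _ => ℝ) s x :=
    Fin.insertNth_last' x s
  rw [← lintegral_indicator (measurableSet_orderedSimplex _ _),
    ← he.lintegral_comp_emb e.symm.measurableEmbedding, ← lintegral_indicator measurableSet_Ioo]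
  refine (lintegral_prod_le _).trans (lintegral_mono fun x => ?_)
  simp only [he_apply]
  by_cases hx : x ∈ Set.Ioo 0 t
  · rw [Set.indicator_of_mem hx, ← lintegral_const_mul' _ _ ENNReal.ofReal_ne_top,
      ← lintegral_indicator (measurableSet_orderedSimplex _ _)]
    refine lintegral_mono fun s => ?_
    by_cases hs : Fin.snoc (α := fun _ => ℝ) s x ∈ orderedSimplex (n + 1) t
    swap
    · simp only [Set.indicator_of_notMem hs, zero_le]
    rw [Set.indicator_of_mem hs, Set.indicator_of_mem (snoc_mem_orderedSimplex hs).2, incrementProd_snoc,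
      ENNReal.ofReal_mul (Real.rpow_nonneg (sub_nonneg.2 hx.2.le) _)]
  · rw [Set.indicator_of_notMem hx]
    refine (lintegral_mono (g := fun _ => 0) fun s => ?_).trans (by simp)
    rw [Set.indicator_of_notMem fun hs => hx (snoc_mem_orderedSimplex hs).1]

lemma lintegral_rpow_mul_exp_neg_mul_Ioi {h r : ℝ} (hh : -1 < h) (hr : 0 < r) :
    ∫⁻ x in Set.Ioi 0, ENNReal.ofReal (x ^ h * Real.exp (-(r * x))) =
      ENNReal.ofReal ((1 / r) ^ (1 + h) * Real.Gamma (1 + h)) := by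
  have hpos : 0 < 1 + h := by linarith
  have hint := Real.integral_rpow_mul_exp_neg_mul_Ioi hpos hr
  simp only [add_sub_cancel_left] at hint
  rw [← hint, ofReal_integral_eq_lintegral_ofReal]
  · refine Integrable.of_integral_ne_zero ?_
    rw [hint]
    have := Real.Gamma_pos_of_pos hpos
    positivity
  · filter_upwards [self_mem_ae_restrict measurableSet_Ioi] with x hx
    have : 0 < x := hx
    simp only [Pi.zero_apply]
    positivity

/-- A bound for the Beta integral `∫₀ᵗ (t - x)^h x^{(1+h)n} dx`, sharp up to a constant in `n`. -/
lemma lintegral_sub_rpow_mul_rpow_le {h t : ℝ} (hh : -1 < h) (ht : 0 < t) (n : ℕ) :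
    ∫⁻ x in Set.Ioo 0 t, ENNReal.ofReal ((t - x) ^ h * x ^ ((1 + h) * n)) ≤
      ENNReal.ofReal (Real.exp (1 + h) * Real.Gamma (1 + h) / (1 + h) ^ (1 + h) *
        t ^ ((1 + h) * (n + 1 : ℕ)) / ((n + 1 : ℕ) : ℝ) ^ (1 + h)) := by
  have ha : 0 < 1 + h := by linarith
  set a := 1 + h with ha_def
  have hN : (0 : ℝ) < (n + 1 : ℕ) := by positivity
  set N : ℝ := ((n + 1 : ℕ) : ℝ) with hN_def
  have hNn : (n : ℝ) = N - 1 := by simp [hN_def]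
  set r := a * N / t with hr_def
  have hr : 0 < r := by positivity
  let K := Real.exp a * t ^ (a * n)
  have hK : 0 ≤ K := by positivity
  let G : ℝ → ENNReal := (Set.Ioi 0).indicator
    fun y => ENNReal.ofReal (y ^ h * Real.exp (-(r * y)))
  have hpt (x : ℝ) (hx : x ∈ Set.Ioo 0 t) :
      ENNReal.ofReal ((t - x) ^ h * x ^ (a * n)) ≤ ENNReal.ofReal K * G (t - x) := by
    have hy : 0 < t - x := sub_pos.2 hx.2
    have hpow : x ^ (a * n) ≤ K * Real.exp (-(r * (t - x))) := by
      have hxt : x / t ≤ Real.exp (-((t - x) / t)) := by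
        have := Real.add_one_le_exp (-((t - x) / t))
        refine le_trans (le_of_eq ?_) this
        field_simp
        ring
      have hle : (x / t) ^ (a * n) ≤ Real.exp a * Real.exp (-(r * (t - x))) := by
        refine (Real.rpow_le_rpow (div_nonneg hx.1.le ht.le) hxt (by positivity)).trans ?_
        rw [← Real.exp_mul, ← Real.exp_add, Real.exp_le_exp, hNn, hr_def]
        have : 0 ≤ a * (x / t) := mul_nonneg ha.le (div_nonneg hx.1.le ht.le)
        have heq : a + -(a * N / t * (t - x)) - -((t - x) / t) * (a * (N - 1)) = a * (x / t) := by
          field_simp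
          ring
        linarith
      calc x ^ (a * n) = t ^ (a * n) * (x / t) ^ (a * n) := by
            rw [← Real.mul_rpow ht.le (div_nonneg hx.1.le ht.le), mul_div_cancel₀ _ ht.ne']
        _ ≤ t ^ (a * n) * (Real.exp a * Real.exp (-(r * (t - x)))) := by gcongr
        _ = K * Real.exp (-(r * (t - x))) := by ring
    have hG : G (t - x) = ENNReal.ofReal ((t - x) ^ h * Real.exp (-(r * (t - x)))) :=
      Set.indicator_of_mem (show t - x ∈ Set.Ioi 0 from hy) _
    rw [hG, ← ENNReal.ofReal_mul hK]
    refine ENNReal.ofReal_le_ofReal ?_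
    calc (t - x) ^ h * x ^ (a * n)
        ≤ (t - x) ^ h * (K * Real.exp (-(r * (t - x)))) := by gcongr
      _ = K * ((t - x) ^ h * Real.exp (-(r * (t - x)))) := by ring
  calc ∫⁻ x in Set.Ioo 0 t, ENNReal.ofReal ((t - x) ^ h * x ^ (a * n))
      ≤ ∫⁻ x in Set.Ioo 0 t, ENNReal.ofReal K * G (t - x) :=
        setLIntegral_mono' measurableSet_Ioo hpt
    _ ≤ ∫⁻ x, ENNReal.ofReal K * G (t - x) := setLIntegral_le_lintegral _ _
    _ = ENNReal.ofReal K * ∫⁻ y, G y := by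
        rw [lintegral_const_mul' _ _ ENNReal.ofReal_ne_top, lintegral_sub_left_eq_self G t]
    _ = ENNReal.ofReal (K * ((1 / r) ^ a * Real.Gamma a)) := by
        rw [lintegral_indicator measurableSet_Ioi, lintegral_rpow_mul_exp_neg_mul_Ioi hh hr,
          ENNReal.ofReal_mul hK]
    _ = _ := by
        congr 1
        have hsplit : t ^ (a * N) = t ^ (a * n) * t ^ a := by
          rw [← Real.rpow_add ht, hNn]
          ring_nf
        rw [hsplit, hr_def, one_div_div, Real.div_rpow ht.le (by positivity),
          Real.mul_rpow ha.le hN.le]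
        simp only [K]
        field_simp

lemma lintegral_orderedSimplex_le {h : ℝ} (hh : -1 < h) (n : ℕ) {t : ℝ} (ht : 0 < t) :
    ∫⁻ s in orderedSimplex n t, ENNReal.ofReal (incrementProd h s t) ≤
      ENNReal.ofReal ((Real.exp (1 + h) * Real.Gamma (1 + h) / (1 + h) ^ (1 + h)) ^ n *
        t ^ ((1 + h) * n) / (n ! : ℝ) ^ (1 + h)) := by
  have ha : 0 < 1 + h := by linarith
  have hΓ := Real.Gamma_pos_of_pos ha
  set c := Real.exp (1 + h) * Real.Gamma (1 + h) / (1 + h) ^ (1 + h) with hc_def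
  have hc : 0 < c := by positivity
  induction n generalizing t with
  | zero =>
    refine (setLIntegral_le_lintegral _ _).trans ?_
    simp [incrementProd, volume_pi]
  | succ n ih =>
    let M := c ^ n / (n ! : ℝ) ^ (1 + h)
    have hM : 0 ≤ M := by positivity
    calc _ ≤ _ := lintegral_orderedSimplex_succ_le h n t
      _ ≤ ∫⁻ x in Set.Ioo 0 t,
          ENNReal.ofReal M * ENNReal.ofReal ((t - x) ^ h * x ^ ((1 + h) * n)) := by
        refine setLIntegral_mono' measurableSet_Ioo fun x hx => ?_
        have hy : 0 < t - x := sub_pos.2 hx.2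
        refine (mul_le_mul_right (ih hx.1) _).trans (le_of_eq ?_)
        rw [← ENNReal.ofReal_mul (by positivity), ← ENNReal.ofReal_mul hM]
        congr 1
        simp only [M]
        ring
      _ ≤ ENNReal.ofReal M * ENNReal.ofReal
          (c * t ^ ((1 + h) * (n + 1 : ℕ)) / ((n + 1 : ℕ) : ℝ) ^ (1 + h)) := by
        rw [lintegral_const_mul' _ _ ENNReal.ofReal_ne_top]
        gcongr
        exact lintegral_sub_rpow_mul_rpow_le hh ht n
      _ = _ := by
        rw [← ENNReal.ofReal_mul hM, Nat.factorial_succ, Nat.cast_mul,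
          Real.mul_rpow (by positivity) (by positivity)]
        congr 1
        simp only [M]
        rw [pow_succ]
        field_simp

/-- For every real `h > -1` there is a constant `c₁ > 0` (depending only on `h`) such that for
every integer `n ≥ 1` and every `t > 0`, the integral over the simplex `{0 < t₁ < ⋯ < t_n < t}`
of `(t - t_n)^h · ∏_{j=1}^{n-1} (t_{j+1} - t_j)^h` is at most `c₁ⁿ · t^{(1+h)n} / (n!)^{1+h}`. -/
theorem stmt_2 (h : ℝ) (hh : -1 < h) :
    ∃ c₁ : ℝ, 0 < c₁ ∧ ∀ n : ℕ, ∀ hn : 1 ≤ n, ∀ t : ℝ, 0 < t →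
      (∫⁻ s in {s : Fin n → ℝ | StrictMono s ∧ 0 < s ⟨0, by omega⟩ ∧ s ⟨n - 1, by omega⟩ < t},
          ENNReal.ofReal ((t - s ⟨n - 1, by omega⟩) ^ h *
            ∏ j : Fin (n - 1),
              (s ⟨(j : ℕ) + 1, by have := j.isLt; omega⟩ -
                s ⟨(j : ℕ), by have := j.isLt; omega⟩) ^ h)) ≤
        ENNReal.ofReal (c₁ ^ n * t ^ ((1 + h) * n) / (n ! : ℝ) ^ (1 + h)) := by
  have ha : 0 < 1 + h := by linarith
  have hΓ := Real.Gamma_pos_of_pos ha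
  refine ⟨Real.exp (1 + h) * Real.Gamma (1 + h) / (1 + h) ^ (1 + h), by positivity,
    fun n hn t ht => ?_⟩
  obtain ⟨n, rfl⟩ := Nat.exists_eq_add_of_le' hn
  refine le_trans (le_of_eq ?_) (lintegral_orderedSimplex_le hh (n + 1) ht)
  congr 1
  · congr 1
    ext s
    refine and_congr_right fun hs => ⟨fun ⟨h0, h1⟩ i => ⟨?_, ?_⟩, fun hs' => ⟨(hs' _).1, (hs' _).2⟩⟩
    · exact h0.trans_le (hs.monotone (Fin.zero_le i))
    · exact (hs.monotone (Fin.le_last i)).trans_lt h1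
  · ext s
    congr 1
    conv_rhs => rw [← Fin.snoc_init_self s, incrementProd_snoc]
    congr 1
    refine Finset.prod_congr rfl fun j _ => ?_
    rw [Fin.snoc_init_self]
    rfl
end

section
/- Let d ≥ 1, let α₁, …, α_d ∈ (0,1), set a = ∑_{j=1}^{d} α_j, and let μ_α be the measure on ℝ^d with density ∏_{j=1}^{d} |ξ_j|^{α_j - 1} with respect to Lebesgue measure. Let S = sup_{θ ∈ ℝ^d} ∫_{ℝ^d} (1 + |ξ - θ|²)^{-1} μ_α(dξ) and assume S < ∞. Then for every t > 0 and every η ∈ ℝ^d, ∫_{ℝ^d} sin²(t|ξ|)/|ξ|² · ∏_{j=1}^{d} |ξ_j - η_j|^{α_j - 1} dξ ≤ 4·t^{2-a}·S, where sin²(t|ξ|)/|ξ|² is interpreted as t² when ξ = 0. -/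
open MeasureTheory
open scoped ENNReal Classical

lemma sin_sq_mul_one_add_sq_le (x : ℝ) : Real.sin x ^ 2 * (1 + x ^ 2) ≤ 4 * x ^ 2 := by
  have h₁ : Real.sin x ^ 2 ≤ x ^ 2 := sq_le_sq.mpr Real.abs_sin_le_abs
  have h₂ : Real.sin x ^ 2 ≤ 1 := Real.sin_sq_le_one x
  nlinarith [sq_nonneg x]

lemma wave_multiplier_le {E : Type*} [NormedAddCommGroup E] {t : ℝ} (ht : 0 < t) (ξ : E)
    [Decidable (ξ = 0)] :
    (if ξ = 0 then t ^ 2 else Real.sin (t * ‖ξ‖) ^ 2 / ‖ξ‖ ^ 2) ≤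
      4 * t ^ 2 * (1 + (t * ‖ξ‖) ^ 2)⁻¹ := by
  split_ifs with h
  · subst h
    simp only [norm_zero, mul_zero]
    nlinarith [sq_nonneg t]
  · have hξ : 0 < ‖ξ‖ := norm_pos_iff.mpr h
    rw [← div_eq_mul_inv, div_le_div_iff₀ (by positivity) (by positivity)]
    nlinarith [sin_sq_mul_one_add_sq_le (t * ‖ξ‖)]

lemma prod_abs_rpow_eq_rpow_mul_prod_abs_mul_rpow {d : ℕ} (α : Fin d → ℝ) {t : ℝ} (ht : 0 < t)
    (x : Fin d → ℝ) :
    ∏ j, |x j| ^ (α j - 1) = t ^ (d - ∑ j, α j) * ∏ j, |t * x j| ^ (α j - 1) := by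
  have h : (d : ℝ) - ∑ j, α j = ∑ j, (1 - α j) := by simp
  rw [h, Real.rpow_sum_of_pos ht, ← Finset.prod_mul_distrib]
  refine Finset.prod_congr rfl fun j _ => ?_
  rw [abs_mul, abs_of_pos ht, Real.mul_rpow ht.le (abs_nonneg _), ← mul_assoc,
    ← Real.rpow_add ht]
  simp

lemma lintegral_comp_smul_sub {E : Type*} [NormedAddCommGroup E] [NormedSpace ℝ E]
    [MeasurableSpace E] [BorelSpace E] [FiniteDimensional ℝ E] (μ : Measure E)
    [μ.IsAddHaarMeasure] {f : E → ℝ≥0∞} (hf : Measurable f) {t : ℝ} (ht : t ≠ 0) (η : E) :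
    ∫⁻ x, f (t • (x - η)) ∂μ =
      ENNReal.ofReal |(t ^ Module.finrank ℝ E)⁻¹| * ∫⁻ x, f x ∂μ := by
  rw [lintegral_sub_right_eq_self (fun x => f (t • x)) η,
    ← lintegral_map hf (measurable_const_smul t), Measure.map_addHaar_smul μ ht,
    lintegral_smul_measure, smul_eq_mul]

/-- Let `μ_α` be the measure on `ℝ^d` with density `∏_j |ξ_j|^{α_j-1}` (all `α_j ∈ (0,1)`),
`a = ∑_j α_j`, and `S = sup_θ ∫ (1+|ξ-θ|²)⁻¹ μ_α(dξ) < ∞`. Then for every `t > 0` and `η ∈ ℝ^d`,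
`∫ sin²(t|ξ|)/|ξ|² ∏_j |ξ_j-η_j|^{α_j-1} dξ ≤ 4 t^{2-a} S`, the quotient being `t²` at `ξ = 0`. -/
theorem stmt_9 (d : ℕ) (hd : 1 ≤ d) (α : Fin d → ℝ) (hα : ∀ j, α j ∈ Set.Ioo (0 : ℝ) 1)
    (a : ℝ) (ha : a = ∑ j, α j)
    (μα : Measure (EuclideanSpace ℝ (Fin d)))
    (hμα : μα = volume.withDensity fun ξ => ENNReal.ofReal (∏ j, |ξ j| ^ (α j - 1)))
    (S : ℝ≥0∞)
    (hS : S = ⨆ θ : EuclideanSpace ℝ (Fin d),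
      ∫⁻ ξ, ENNReal.ofReal ((1 + ‖ξ - θ‖ ^ 2)⁻¹) ∂μα)
    (hSfin : S ≠ ⊤)
    (t : ℝ) (ht : 0 < t) (η : EuclideanSpace ℝ (Fin d)) :
    (∫⁻ ξ : EuclideanSpace ℝ (Fin d),
        ENNReal.ofReal ((if ξ = 0 then t ^ 2 else Real.sin (t * ‖ξ‖) ^ 2 / ‖ξ‖ ^ 2) *
          ∏ j, |ξ j - η j| ^ (α j - 1))) ≤
      ENNReal.ofReal (4 * t ^ (2 - a)) * S := by
  subst ha
  set w : EuclideanSpace ℝ (Fin d) → ℝ := fun x => ∏ j, |x j| ^ (α j - 1) with hw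
  have hw_meas : Measurable w := by fun_prop
  have hw_nonneg (x) : 0 ≤ w x := Finset.prod_nonneg fun j _ => by positivity
  set k : EuclideanSpace ℝ (Fin d) → ℝ := fun x => (1 + ‖x - (-(t • η))‖ ^ 2)⁻¹ with hk
  have hk_meas : Measurable k := by fun_prop
  set G : EuclideanSpace ℝ (Fin d) → ℝ≥0∞ :=
    fun x => ENNReal.ofReal (w x) * ENNReal.ofReal (k x) with hG
  have hG_meas : Measurable G := by fun_prop
  have hGS : ∫⁻ x, G x ≤ S := by
    rw [hS]
    refine le_trans (le_of_eq ?_) (le_iSup _ (-(t • η)))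
    rw [hμα, lintegral_withDensity_eq_lintegral_mul _ (by fun_prop) (by fun_prop)]
    rfl
  have hpt (ξ : EuclideanSpace ℝ (Fin d)) :
      ENNReal.ofReal ((if ξ = 0 then t ^ 2 else Real.sin (t * ‖ξ‖) ^ 2 / ‖ξ‖ ^ 2) *
          ∏ j, |ξ j - η j| ^ (α j - 1)) ≤
        ENNReal.ofReal (4 * t ^ 2 * t ^ (d - ∑ j, α j)) * G (t • (ξ - η)) := by
    have hkξ : k (t • (ξ - η)) = (1 + (t * ‖ξ‖) ^ 2)⁻¹ := by
      simp [hk, smul_sub, norm_smul, abs_of_pos ht]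
    have hwξ : ∏ j, |ξ j - η j| ^ (α j - 1) = t ^ (d - ∑ j, α j) * w (t • (ξ - η)) := by
      rw [prod_abs_rpow_eq_rpow_mul_prod_abs_mul_rpow α ht fun j => ξ j - η j]
      simp [hw]
    simp only [hG]
    rw [← ENNReal.ofReal_mul (hw_nonneg _), ← ENNReal.ofReal_mul (by positivity), hwξ, hkξ]
    refine ENNReal.ofReal_le_ofReal ?_
    have hc : 0 ≤ t ^ (d - ∑ j, α j) * w (t • (ξ - η)) :=
      mul_nonneg (by positivity) (hw_nonneg _)
    refine (mul_le_mul_of_nonneg_right (wave_multiplier_le ht ξ) hc).trans (le_of_eq ?_)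
    ring
  have hconst : 4 * t ^ 2 * t ^ (d - ∑ j, α j) * |(t ^ d)⁻¹| = 4 * t ^ (2 - ∑ j, α j) := by
    rw [abs_of_pos (by positivity), Real.rpow_sub ht, Real.rpow_sub ht, Real.rpow_natCast,
      Real.rpow_ofNat]
    field_simp
  calc _ ≤ ∫⁻ ξ, ENNReal.ofReal (4 * t ^ 2 * t ^ (d - ∑ j, α j)) * G (t • (ξ - η)) :=
        lintegral_mono hpt
    _ = ENNReal.ofReal (4 * t ^ (2 - ∑ j, α j)) * ∫⁻ x, G x := by
        rw [lintegral_const_mul _ (by fun_prop), lintegral_comp_smul_sub _ hG_meas ht.ne' η,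
          finrank_euclideanSpace_fin, ← mul_assoc, ← ENNReal.ofReal_mul (by positivity), hconst]
    _ ≤ _ := by gcongr
end

section
/- Let H ∈ (1/2, 1), set α_H = H(2H-1), and let a ∈ [0,2). For t > 0 and 𝐭 = (t₁,…,t_n) ∈ [0,t]ⁿ, let t_{(1)} ≤ ⋯ ≤ t_{(n)} be the nondecreasing rearrangement of t₁,…,t_n, set t_{(n+1)} = t, and define β(𝐭) = ∏_{j=1}^{n} (t_{(j+1)} - t_{(j)}). Then there exists a constant c > 0 (depending only on H and a) such that for every integer n ≥ 1 and every t > 0, α_Hⁿ · ∫_{[0,t]^{2n}} ∏_{j=1}^{n} |t_j - s_j|^{2H-2} · (β(𝐭)·β(𝐬))^{(2-a)/2} d𝐭 d𝐬 ≤ cⁿ · t^{(2H+2-a)n} / (n!)^{2-a}. -/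
open MeasureTheory
open scoped Nat

/-- For `v = (v₁,…,v_n) ∈ [0,t]ⁿ`, `gapProd t v = ∏_{j=1}^{n} (v_{(j+1)} - v_{(j)})`, where
`v_{(1)} ≤ ⋯ ≤ v_{(n)}` is the nondecreasing rearrangement of `v` and `v_{(n+1)} = t`. -/
noncomputable def gapProd {n : ℕ} (t : ℝ) (v : Fin n → ℝ) : ℝ :=
  let w : Fin (n + 1) → ℝ := Fin.snoc (v ∘ Tuple.sort v) t
  ∏ j : Fin n, (w j.succ - w j.castSucc)

/-- The **Tonelli theorem** for a product of functions of the separate coordinates. -/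
theorem lintegral_fin_prod_eq_prod {n : ℕ} {E : Type*} [MeasurableSpace E]
    {μ : Fin n → Measure E} [∀ i, SigmaFinite (μ i)] {f : Fin n → E → ENNReal}
    (hf : ∀ i, Measurable (f i)) :
    ∫⁻ x, ∏ i, f i (x i) ∂(Measure.pi μ) = ∏ i, ∫⁻ x, f i x ∂(μ i) := by
  induction n with
  | zero => simp
  | succ n ih =>
    rw [← (measurePreserving_piFinSuccAbove μ 0).symm.lintegral_comp
      (f := fun x => ∏ i, f i (x i))
      (Finset.measurable_fun_prod _ fun i _ => (hf i).comp (measurable_pi_apply i))]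
    simp_rw [MeasurableEquiv.piFinSuccAbove_symm_apply, Fin.insertNthEquiv,
      Fin.prod_univ_succ, Fin.insertNth_zero, Equiv.coe_fn_mk, Fin.cons_succ,
      Fin.zero_succAbove, cast_eq, Fin.cons_zero]
    rw [lintegral_prod_mul (f := f 0) (g := fun y : Fin n → E => ∏ i, f i.succ (y i))
      (hf 0).aemeasurable
      (Finset.measurable_fun_prod _ fun i _ =>
        (hf i.succ).comp (measurable_pi_apply i)).aemeasurable,
      ih fun i => hf i.succ]

/-- The inequality of arithmetic and geometric means for nonnegative reals of sum at most `t`. -/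
theorem prod_le_div_pow_of_sum_le {n : ℕ} (hn : 1 ≤ n) {t : ℝ} {z : Fin n → ℝ}
    (hz : ∀ i, 0 ≤ z i) (hsum : ∑ i, z i ≤ t) : ∏ i, z i ≤ (t / n) ^ n := by
  have hn0 : (0 : ℝ) < n := by exact_mod_cast hn
  have hprod : 0 ≤ ∏ i, z i := Finset.prod_nonneg fun i _ => hz i
  have h := Real.geom_mean_le_arith_mean Finset.univ (fun _ : Fin n => (1 : ℝ)) z
    (fun _ _ => zero_le_one) (by simpa using hn0) fun i _ => hz i
  simp only [Real.rpow_one, one_mul, Finset.sum_const, Finset.card_univ, Fintype.card_fin,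
    nsmul_eq_mul, mul_one] at h
  calc ∏ i, z i = ((∏ i, z i) ^ (n : ℝ)⁻¹) ^ n :=
        (Real.rpow_inv_natCast_pow hprod (by omega)).symm
    _ ≤ (t / n) ^ n := by gcongr; exact h.trans (by gcongr)

theorem gapProd_nonneg_and_le {n : ℕ} (hn : 1 ≤ n) {t : ℝ} (ht : 0 < t) {v : Fin n → ℝ}
    (hv : v ∈ Set.Icc (0 : Fin n → ℝ) (fun _ => t)) :
    0 ≤ gapProd t v ∧ gapProd t v ≤ t ^ n / n ! := by
  set w : Fin (n + 1) → ℝ := Fin.snoc (v ∘ Tuple.sort v) t with hw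
  have hgap : gapProd t v = ∏ j : Fin n, (w j.succ - w j.castSucc) := rfl
  have hmono : Monotone w := by
    refine Fin.monotone_iff_le_succ.2 fun i => ?_
    rcases Nat.lt_or_ge (i + 1) n with hi | hi
    · have hs : i.succ = Fin.castSucc ⟨i + 1, hi⟩ := Fin.ext rfl
      rw [hs, hw, Fin.snoc_castSucc, Fin.snoc_castSucc]
      exact Tuple.monotone_sort v (Fin.le_def.2 (Nat.le_succ _))
    · have hs : i.succ = Fin.last n := Fin.ext (by simp; omega)
      rw [hs, hw, Fin.snoc_castSucc, Fin.snoc_last]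
      exact hv.2 _
  have hnn : ∀ j : Fin n, 0 ≤ w j.succ - w j.castSucc := fun j =>
    sub_nonneg.2 (hmono (Fin.castSucc_lt_succ).le)
  have hw0 : 0 ≤ w 0 := by
    have hs : (0 : Fin (n + 1)) = Fin.castSucc ⟨0, hn⟩ := rfl
    rw [hs, hw, Fin.snoc_castSucc]
    exact hv.1 _
  have hsum : ∑ j : Fin n, (w j.succ - w j.castSucc) ≤ t := by
    have h1 := Fin.sum_univ_succ w
    have h2 := Fin.sum_univ_castSucc w
    have h3 : w (Fin.last n) = t := by rw [hw, Fin.snoc_last]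
    rw [Finset.sum_sub_distrib]
    linarith
  refine ⟨hgap ▸ Finset.prod_nonneg fun j _ => hnn j, ?_⟩
  calc gapProd t v ≤ (t / n) ^ n := hgap ▸ prod_le_div_pow_of_sum_le hn hnn hsum
    _ = t ^ n / (n : ℝ) ^ n := div_pow _ _ _
    _ ≤ t ^ n / n ! := by gcongr; exact_mod_cast Nat.factorial_le_pow n

theorem setLIntegral_Ioc_rpow {r t : ℝ} (hr : -1 < r) (ht : 0 ≤ t) :
    ∫⁻ x in Set.Ioc 0 t, ENNReal.ofReal (|x| ^ r) = ENNReal.ofReal (t ^ (r + 1) / (r + 1)) := by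
  have hint : IntegrableOn (fun x : ℝ => x ^ r) (Set.Ioc 0 t) := by
    simpa [intervalIntegrable_iff_integrableOn_Ioc_of_le ht] using
      intervalIntegral.intervalIntegrable_rpow' (a := 0) (b := t) hr
  have hval : ∫ x in Set.Ioc 0 t, x ^ r = t ^ (r + 1) / (r + 1) := by
    rw [← intervalIntegral.integral_of_le ht, integral_rpow (Or.inl hr),
      Real.zero_rpow (by linarith), sub_zero]
  rw [← hval, ofReal_integral_eq_lintegral_ofReal hint
    (ae_restrict_of_forall_mem measurableSet_Ioc fun x hx => Real.rpow_nonneg hx.1.le r)]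
  exact setLIntegral_congr_fun measurableSet_Ioc fun x hx => by simp only [abs_of_pos hx.1]

theorem setLIntegral_abs_sub_rpow_le {r t u : ℝ} (hr : -1 < r) (hu : u ∈ Set.Icc 0 t) :
    ∫⁻ s in Set.Icc 0 t, ENNReal.ofReal (|u - s| ^ r) ≤
      ENNReal.ofReal (2 * t ^ (r + 1) / (r + 1)) := by
  have ht : 0 ≤ t := hu.1.trans hu.2
  set g : ℝ → ENNReal := fun x => ENNReal.ofReal (|x| ^ r) with hg
  have hmp : MeasurePreserving (fun s : ℝ => u - s) volume volume :=
    Measure.measurePreserving_sub_left volume u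
  have hneg : MeasurePreserving (fun s : ℝ => -s) volume volume :=
    Measure.measurePreserving_neg volume
  have hgm : Measurable g := by fun_prop
  have hleft : ∫⁻ x in Set.Ico (-t) 0, g x = ∫⁻ x in Set.Ioc 0 t, g x := by
    rw [← hneg.setLIntegral_comp_preimage measurableSet_Ioc hgm]
    simp [hg]
  have hsub : Set.Icc 0 t ⊆ (fun s => u - s) ⁻¹' Set.Icc (-t) t := fun s hs =>
    ⟨by linarith [hs.2, hu.1], by linarith [hs.1, hu.2]⟩
  have hcover : Set.Icc (-t) t ⊆ Set.Ico (-t) 0 ∪ ({0} ∪ Set.Ioc 0 t) := by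
    intro x hx
    rcases lt_trichotomy x 0 with h | h | h
    · exact Or.inl ⟨hx.1, h⟩
    · exact Or.inr (Or.inl h)
    · exact Or.inr (Or.inr ⟨h, hx.2⟩)
  calc ∫⁻ s in Set.Icc 0 t, g (u - s)
      ≤ ∫⁻ s in (fun s => u - s) ⁻¹' Set.Icc (-t) t, g (u - s) := lintegral_mono_set hsub
    _ = ∫⁻ x in Set.Icc (-t) t, g x := hmp.setLIntegral_comp_preimage measurableSet_Icc hgm
    _ ≤ ∫⁻ x in Set.Ico (-t) 0 ∪ ({0} ∪ Set.Ioc 0 t), g x := lintegral_mono_set hcover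
    _ ≤ (∫⁻ x in Set.Ico (-t) 0, g x) + ((∫⁻ x in {0}, g x) + ∫⁻ x in Set.Ioc 0 t, g x) :=
        (lintegral_union_le _ _ _).trans (by gcongr; exact lintegral_union_le _ _ _)
    _ = ENNReal.ofReal (2 * t ^ (r + 1) / (r + 1)) := by
        have h0 : 0 ≤ t ^ (r + 1) / (r + 1) :=
          div_nonneg (Real.rpow_nonneg ht _) (by linarith)
        rw [hleft, setLIntegral_Ioc_rpow hr ht, setLIntegral_measure_zero _ _ (by simp), zero_add,
          ← ENNReal.ofReal_add h0 h0]
        congr 1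
        ring

theorem setLIntegral_prod_abs_sub_rpow_le {n : ℕ} {r t : ℝ} (hr : -1 < r) (ht : 0 < t) :
    ∫⁻ p in (Set.Icc (0 : Fin n → ℝ) (fun _ => t)) ×ˢ (Set.Icc (0 : Fin n → ℝ) (fun _ => t)),
        ENNReal.ofReal (∏ j, |p.1 j - p.2 j| ^ r) ≤
      ENNReal.ofReal (t * (2 * t ^ (r + 1) / (r + 1))) ^ n := by
  rw [Measure.volume_eq_prod, ← Measure.prod_restrict, lintegral_prod _ (by fun_prop)]
  have hinner : ∀ u ∈ Set.Icc (0 : Fin n → ℝ) (fun _ => t),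
      ∫⁻ s in Set.Icc (0 : Fin n → ℝ) (fun _ => t), ENNReal.ofReal (∏ j, |u j - s j| ^ r) ≤
        ENNReal.ofReal (2 * t ^ (r + 1) / (r + 1)) ^ n := by
    intro u hu
    simp_rw [ENNReal.ofReal_prod_of_nonneg fun j _ => Real.rpow_nonneg (abs_nonneg _) r]
    rw [← Set.pi_univ_Icc, volume_pi, Measure.restrict_pi_pi,
      lintegral_fin_prod_eq_prod (f := fun j s => ENNReal.ofReal (|u j - s| ^ r))
        fun j => by fun_prop]
    refine (Finset.prod_le_prod' fun j _ =>
      setLIntegral_abs_sub_rpow_le hr ⟨hu.1 j, hu.2 j⟩).trans_eq ?_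
    simp
  refine (setLIntegral_mono' measurableSet_Icc hinner).trans_eq ?_
  rw [setLIntegral_const, Real.volume_Icc_pi]
  simp [ENNReal.ofReal_mul ht.le, mul_pow, mul_comm]

/-- For `H ∈ (1/2,1)`, `α_H = H(2H-1)` and `a ∈ [0,2)`, there is `c > 0` (depending only on `H`
and `a`) such that for all `n ≥ 1` and `t > 0`,
`α_Hⁿ ∫_{[0,t]^{2n}} ∏_j |t_j-s_j|^{2H-2} (β(𝐭)β(𝐬))^{(2-a)/2} d𝐭 d𝐬
  ≤ cⁿ t^{(2H+2-a)n} / (n!)^{2-a}`. -/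
theorem stmt_13 (H : ℝ) (hH : H ∈ Set.Ioo (1 / 2 : ℝ) 1) (a : ℝ) (ha : a ∈ Set.Ico (0 : ℝ) 2) :
    ∃ c : ℝ, 0 < c ∧ ∀ n : ℕ, 1 ≤ n → ∀ t : ℝ, 0 < t →
      ENNReal.ofReal (H * (2 * H - 1)) ^ n *
        ∫⁻ p in (Set.Icc (0 : Fin n → ℝ) (fun _ => t)) ×ˢ
            (Set.Icc (0 : Fin n → ℝ) (fun _ => t)),
          ENNReal.ofReal ((∏ j : Fin n, |p.1 j - p.2 j| ^ (2 * H - 2)) *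
            (gapProd t p.1 * gapProd t p.2) ^ ((2 - a) / 2)) ≤
      ENNReal.ofReal (c ^ n * t ^ ((2 * H + 2 - a) * n) / (n ! : ℝ) ^ (2 - a)) := by
  obtain ⟨hH1, hH2⟩ := hH
  obtain ⟨ha0, ha2⟩ := ha
  refine ⟨2 * H, by linarith, fun n hn t ht => ?_⟩
  have hq : 0 ≤ (2 - a) / 2 := by linarith
  have hB : 0 ≤ t ^ n / (n ! : ℝ) := by positivity
  have hpoint : ∀ p ∈ (Set.Icc (0 : Fin n → ℝ) (fun _ => t)) ×ˢ
      (Set.Icc (0 : Fin n → ℝ) (fun _ => t)),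
      ENNReal.ofReal ((∏ j : Fin n, |p.1 j - p.2 j| ^ (2 * H - 2)) *
        (gapProd t p.1 * gapProd t p.2) ^ ((2 - a) / 2)) ≤
      ENNReal.ofReal (∏ j : Fin n, |p.1 j - p.2 j| ^ (2 * H - 2)) *
        ENNReal.ofReal ((t ^ n / (n ! : ℝ)) ^ (2 - a)) := by
    intro p hp
    obtain ⟨h1, h1'⟩ := gapProd_nonneg_and_le hn ht hp.1
    obtain ⟨h2, h2'⟩ := gapProd_nonneg_and_le hn ht hp.2
    have hK : 0 ≤ ∏ j : Fin n, |p.1 j - p.2 j| ^ (2 * H - 2) :=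
      Finset.prod_nonneg fun j _ => Real.rpow_nonneg (abs_nonneg _) _
    rw [← ENNReal.ofReal_mul hK]
    gcongr
    calc (gapProd t p.1 * gapProd t p.2) ^ ((2 - a) / 2)
        ≤ ((t ^ n / (n ! : ℝ)) * (t ^ n / (n ! : ℝ))) ^ ((2 - a) / 2) := by gcongr
      _ = (t ^ n / (n ! : ℝ)) ^ (2 - a) := by
        rw [← pow_two, ← Real.rpow_natCast_mul hB]
        congr 1
        push_cast
        ring
  have hα : 0 ≤ H * (2 * H - 1) := mul_nonneg (by linarith) (by linarith)
  have hI : 0 ≤ t * (2 * t ^ (2 * H - 2 + 1) / (2 * H - 2 + 1)) :=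
    mul_nonneg ht.le (div_nonneg (by positivity) (by linarith))
  calc _ ≤ ENNReal.ofReal (H * (2 * H - 1)) ^ n *
        (ENNReal.ofReal (t * (2 * t ^ (2 * H - 2 + 1) / (2 * H - 2 + 1))) ^ n *
          ENNReal.ofReal ((t ^ n / (n ! : ℝ)) ^ (2 - a))) := by
        gcongr
        refine (setLIntegral_mono' (measurableSet_Icc.prod measurableSet_Icc) hpoint).trans ?_
        rw [lintegral_mul_const' _ _ ENNReal.ofReal_ne_top]
        gcongr
        exact setLIntegral_prod_abs_sub_rpow_le (by linarith) ht
    _ = ENNReal.ofReal ((2 * H) ^ n * t ^ ((2 * H + 2 - a) * n) / (n ! : ℝ) ^ (2 - a)) := by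
        rw [← ENNReal.ofReal_pow hα, ← ENNReal.ofReal_pow hI,
          ← ENNReal.ofReal_mul (by positivity), ← ENNReal.ofReal_mul (by positivity)]
        congr 1
        have hbase : H * (2 * H - 1) * (t * (2 * t ^ (2 * H - 2 + 1) / (2 * H - 2 + 1))) =
            2 * H * t ^ (2 * H) := by
          have hne : H * 2 - 1 ≠ 0 := by linarith
          have hexp : t ^ (2 * H) = t * t ^ (2 * H - 1) := by
            rw [Real.rpow_sub_one ht.ne']
            field_simp
          rw [show 2 * H - 2 + 1 = 2 * H - 1 by ring, hexp, mul_comm 2 H]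
          field_simp
        have hpow : t ^ ((2 * H + 2 - a) * n) = (t ^ (2 * H)) ^ n * (t ^ n) ^ (2 - a) := by
          rw [← Real.rpow_mul_natCast ht.le, ← Real.rpow_natCast_mul ht.le, ← Real.rpow_add ht]
          congr 1
          ring
        rw [← mul_assoc, ← mul_pow, hbase, Real.div_rpow (by positivity) (by positivity), hpow,
          mul_pow]
        ring
end

section
/- Let H ∈ (1/2, 1), set α_H = H(2H-1), and let a ∈ [0,2). For t > 0 and 𝐭 = (t₁,…,t_n) ∈ [0,t]ⁿ, let t_{(1)} ≤ ⋯ ≤ t_{(n)} be the nondecreasing rearrangement of t₁,…,t_n, set t_{(n+1)} = t, and define β(𝐭) = ∏_{j=1}^{n} (t_{(j+1)} - t_{(j)}). Then there exists a constant c > 0 (depending only on H and a) such that for every integer n ≥ 1 and every t > 0, α_Hⁿ · ∫_{[0,t]^{2n}} ∏_{j=1}^{n} |t_j - s_j|^{2H-2} · (β(𝐭)·β(𝐬))^{-a/4} d𝐭 d𝐬 ≤ cⁿ · (n!)^{a/2} · t^{(4H-a)n/2}. -/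
open MeasureTheory
open scoped Nat

open scoped ENNReal

theorem gapProd_nonneg {n : ℕ} {t : ℝ} {v : Fin n → ℝ} (hv : ∀ i, v i ≤ t) :
    0 ≤ gapProd t v := by
  refine Finset.prod_nonneg fun j _ => sub_nonneg.2 ?_
  rw [Fin.snoc_castSucc (α := fun _ => ℝ)]
  rcases Fin.eq_castSucc_or_eq_last j.succ with ⟨k, hk⟩ | hk
  · rw [hk, Fin.snoc_castSucc (α := fun _ => ℝ)]
    apply Tuple.monotone_sort v
    have : (j.succ : ℕ) = k := by rw [hk]; rfl
    simp only [Fin.val_succ] at this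
    exact Fin.le_def.2 (by omega)
  · rw [hk, Fin.snoc_last]
    exact hv _

theorem gapProd_eq_mul_of_forall_le {n : ℕ} (t : ℝ) (v : Fin (n + 1) → ℝ) (i : Fin (n + 1))
    (hv : ∀ j, v (i.succAbove j) ≤ v i) :
    gapProd t v = (t - v i) * gapProd (v i) (fun j => v (i.succAbove j)) := by
  set u : Fin n → ℝ := fun j => v (i.succAbove j) with hu
  let w : Fin (n + 1) → ℝ := Fin.snoc (u ∘ Tuple.sort u) (v i)
  let idx : Fin (n + 1) → Fin (n + 1) := Fin.snoc (fun j => i.succAbove (Tuple.sort u j)) i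
  have hidxc : ∀ j : Fin n, idx j.castSucc = i.succAbove (Tuple.sort u j) := fun j =>
    Fin.snoc_castSucc (α := fun _ => Fin (n + 1)) _ _ _
  have hidxl : idx (Fin.last n) = i := Fin.snoc_last (α := fun _ => Fin (n + 1)) _ _
  have hwc : ∀ j : Fin n, w j.castSucc = u (Tuple.sort u j) := fun j =>
    Fin.snoc_castSucc (α := fun _ => ℝ) _ _ _
  have hwl : w (Fin.last n) = v i := Fin.snoc_last (α := fun _ => ℝ) _ _
  have hidx : Function.Injective idx := by
    intro x y
    induction x using Fin.lastCases with
    | last =>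
      induction y using Fin.lastCases with
      | last => simp
      | cast y => rw [hidxc, hidxl]; exact fun h => absurd h.symm (Fin.succAbove_ne _ _)
    | cast x =>
      induction y using Fin.lastCases with
      | last => rw [hidxc, hidxl]; exact fun h => absurd h (Fin.succAbove_ne _ _)
      | cast y => rw [hidxc, hidxc]; simp
  let σ : Equiv.Perm (Fin (n + 1)) := Equiv.ofBijective idx (Finite.injective_iff_bijective.1 hidx)
  have hw : v ∘ σ = w := by
    funext x
    change v (idx x) = w x
    induction x using Fin.lastCases with
    | last => rw [hidxl, hwl]
    | cast x => rw [hidxc, hwc]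
  have hmono : Monotone w := by
    intro x y
    induction y using Fin.lastCases with
    | last =>
      intro _
      induction x using Fin.lastCases with
      | last => exact le_rfl
      | cast x => rw [hwc, hwl]; exact hv _
    | cast y =>
      induction x using Fin.lastCases with
      | last => intro h; exact absurd h (not_le.2 (Fin.castSucc_lt_last y))
      | cast x =>
        rw [hwc, hwc]
        exact fun h => Tuple.monotone_sort u (Fin.castSucc_le_castSucc_iff.1 h)
  have hsort : v ∘ Tuple.sort v = w := by
    rw [← hw]
    exact (Tuple.comp_sort_eq_comp_iff_monotone.2 (hw ▸ hmono)).symm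
  unfold gapProd
  simp only [hsort]
  rw [Fin.prod_univ_castSucc, mul_comm]
  congr 1
  · rw [Fin.succ_last, Fin.snoc_last, Fin.snoc_castSucc (α := fun _ => ℝ), hwl]
  · refine Finset.prod_congr rfl fun j _ => ?_
    rw [Fin.succ_castSucc, Fin.snoc_castSucc (α := fun _ => ℝ),
      Fin.snoc_castSucc (α := fun _ => ℝ)]

theorem measurable_tuple_sort_apply {n : ℕ} (i : Fin n) :
    Measurable fun v : Fin n → ℝ => v (Tuple.sort v i) := by
  have hsort : ∀ σ : Equiv.Perm (Fin n), MeasurableSet {v : Fin n → ℝ | Tuple.sort v = σ} := by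
    intro σ
    have : {v : Fin n → ℝ | Tuple.sort v = σ} =
        {v | ∀ i j, i ≤ j → v (σ i) ≤ v (σ j)} ∩
        {v | ∀ i j, i < j → v (σ i) = v (σ j) → σ i < σ j} := by
      ext v
      exact eq_comm.trans Tuple.eq_sort_iff
    rw [this]
    measurability
  let : MeasurableSpace (Equiv.Perm (Fin n)) := ⊤
  have h1 : Measurable fun v : Fin n → ℝ => Tuple.sort v :=
    measurable_to_countable' fun σ => hsort σ
  have h2 : Measurable fun p : (Fin n → ℝ) × Equiv.Perm (Fin n) => p.1 (p.2 i) :=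
    measurable_from_prod_countable_left fun σ => measurable_pi_apply (σ i)
  exact h2.comp (measurable_id.prodMk h1)

theorem measurable_gapProd {n : ℕ} (t : ℝ) :
    Measurable (gapProd t : (Fin n → ℝ) → ℝ) := by
  have h : ∀ k : Fin (n + 1), Measurable fun v : Fin n → ℝ =>
      (Fin.snoc (v ∘ Tuple.sort v) t : Fin (n + 1) → ℝ) k := by
    intro k
    induction k using Fin.lastCases with
    | last => simp only [Fin.snoc_last]; exact measurable_const
    | cast k =>
      simp only [Fin.snoc_castSucc (α := fun _ => ℝ)]
      exact measurable_tuple_sort_apply k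
  exact Finset.measurable_prod _ fun j _ => (h j.succ).sub (h j.castSucc)

theorem lintegral_Ioc_rpow {p L : ℝ} (hp : -1 < p) (hL : 0 ≤ L) :
    ∫⁻ x in Set.Ioc 0 L, ENNReal.ofReal (x ^ p) = ENNReal.ofReal (L ^ (p + 1) / (p + 1)) := by
  rw [← ofReal_integral_eq_lintegral_ofReal, ← intervalIntegral.integral_of_le hL,
    integral_rpow (Or.inl hp), Real.zero_rpow (by linarith), sub_zero]
  · exact (intervalIntegrable_iff_integrableOn_Ioc_of_le hL).1
      (intervalIntegral.intervalIntegrable_rpow' hp)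
  · exact (ae_restrict_iff' measurableSet_Ioc).2 (.of_forall fun x hx => Real.rpow_nonneg hx.1.le _)

theorem lintegral_Ioc_sub_right_rpow {p L c : ℝ} (hp : -1 < p) (hL : 0 ≤ L) :
    ∫⁻ x in Set.Ioc c (c + L), ENNReal.ofReal ((x - c) ^ p) =
      ENNReal.ofReal (L ^ (p + 1) / (p + 1)) := by
  rw [← lintegral_Ioc_rpow hp hL,
    ← (measurePreserving_sub_right volume c).setLIntegral_comp_preimage measurableSet_Ioc
      (by fun_prop : Measurable fun x : ℝ => ENNReal.ofReal (x ^ p))]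
  simp [add_comm]

theorem lintegral_Icc_sub_left_rpow {p L c : ℝ} (hp : -1 < p) (hL : 0 ≤ L) :
    ∫⁻ x in Set.Icc (c - L) c, ENNReal.ofReal ((c - x) ^ p) =
      ENNReal.ofReal (L ^ (p + 1) / (p + 1)) := by
  rw [← lintegral_Ioc_rpow hp hL,
    setLIntegral_congr (Ioc_ae_eq_Icc (μ := volume) (a := (0 : ℝ)) (b := L)),
    ← (Measure.measurePreserving_sub_left volume c).setLIntegral_comp_preimage measurableSet_Icc
      (by fun_prop : Measurable fun x : ℝ => ENNReal.ofReal (x ^ p))]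
  simp

theorem lintegral_Icc_abs_sub_rpow_le {p t x : ℝ} (hp : -1 < p) (hx : x ∈ Set.Icc 0 t) :
    ∫⁻ s in Set.Icc 0 t, ENNReal.ofReal (|x - s| ^ p) ≤
      ENNReal.ofReal (2 / (p + 1) * t ^ (p + 1)) := by
  have ht : 0 ≤ t := hx.1.trans hx.2
  have hp' : 0 < p + 1 := by linarith
  have hsub : Set.Icc 0 t ⊆ Set.Icc (x - t) x ∪ Set.Ioc x (x + t) := by
    intro s hs
    rcases le_or_gt s x with h | h
    · exact Or.inl ⟨by linarith [hs.1, hx.2], h⟩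
    · exact Or.inr ⟨h, by linarith [hs.2, hx.1]⟩
  refine (lintegral_mono_set hsub).trans ((lintegral_union_le _ _ _).trans ?_)
  have h1 : ∫⁻ s in Set.Icc (x - t) x, ENNReal.ofReal (|x - s| ^ p) =
      ENNReal.ofReal (t ^ (p + 1) / (p + 1)) := by
    rw [← lintegral_Icc_sub_left_rpow (c := x) hp ht]
    refine setLIntegral_congr_fun measurableSet_Icc fun s hs => ?_
    simp only [abs_of_nonneg (sub_nonneg.2 hs.2)]
  have h2 : ∫⁻ s in Set.Ioc x (x + t), ENNReal.ofReal (|x - s| ^ p) =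
      ENNReal.ofReal (t ^ (p + 1) / (p + 1)) := by
    rw [← lintegral_Ioc_sub_right_rpow (c := x) hp ht]
    refine setLIntegral_congr_fun measurableSet_Ioc fun s hs => ?_
    simp only [abs_sub_comm x s, abs_of_pos (sub_pos.2 hs.1)]
  rw [h1, h2, ← ENNReal.ofReal_add (by positivity) (by positivity)]
  exact ENNReal.ofReal_le_ofReal (le_of_eq (by ring))

theorem lintegral_pi_fin_prod {n : ℕ} (μ : Fin n → Measure ℝ) [∀ i, SigmaFinite (μ i)]
    {f : Fin n → ℝ → ℝ≥0∞} (hf : ∀ i, Measurable (f i)) :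
    ∫⁻ s, ∏ j, f j (s j) ∂Measure.pi μ = ∏ j, ∫⁻ x, f j x ∂μ j := by
  induction n with
  | zero => simp
  | succ n ih =>
    have hmeas : Measurable fun u : Fin n → ℝ => ∏ j, f j.succ (u j) :=
      Finset.measurable_prod _ fun j _ => (hf j.succ).comp (measurable_pi_apply j)
    rw [Fin.prod_univ_succ, ← ih (fun j => μ j.succ) (fun j => hf j.succ),
      ← lintegral_prod_mul (hf 0).aemeasurable hmeas.aemeasurable]
    have := (measurePreserving_piFinSuccAbove μ 0).lintegral_comp_emb
      (MeasurableEquiv.measurableEmbedding _)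
      (fun z => f 0 z.1 * ∏ j : Fin n, f j.succ (z.2 j))
    refine Eq.trans ?_ this
    refine lintegral_congr fun s => ?_
    rw [Fin.prod_univ_succ]
    rfl

/-- A Beta-integral estimate, with the sharp order of decay in `n`. -/
theorem lintegral_beta_le {b t : ℝ} (hb0 : 0 ≤ b) (hb1 : b < 1) (ht : 0 < t) (n : ℕ) :
    ∫⁻ x in Set.Ioc 0 t, ENNReal.ofReal ((t - x) ^ (-b) * x ^ (n * (1 - b))) ≤
      ENNReal.ofReal (2 / (1 - b) * ((n : ℝ) + 1) ^ (b - 1) * t ^ (((n : ℝ) + 1) * (1 - b))) := by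
  have hb' : 0 < 1 - b := by linarith
  have hn : (0 : ℝ) < (n : ℝ) + 1 := by positivity
  set γ : ℝ := n * (1 - b) with hγ
  have hγ0 : 0 ≤ γ := by positivity
  set δ : ℝ := t / (n + 1) with hδ
  have hδ0 : 0 < δ := by positivity
  have hsub : Set.Ioc 0 t ⊆
      (Set.Icc (t - δ) t ∩ Set.Ioc 0 t) ∪ (Set.Ioc 0 t ∩ Set.Iic (t - δ)) := by
    intro x hx
    rcases le_total x (t - δ) with h | h
    · exact Or.inr ⟨hx, h⟩
    · exact Or.inl ⟨⟨h, hx.2⟩, hx⟩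
  refine (lintegral_mono_set hsub).trans ((lintegral_union_le _ _ _).trans ?_)
  have h1 : ∫⁻ x in Set.Icc (t - δ) t ∩ Set.Ioc 0 t,
      ENNReal.ofReal ((t - x) ^ (-b) * x ^ γ) ≤
      ENNReal.ofReal (t ^ γ * (δ ^ (-b + 1) / (-b + 1))) := by
    calc _ ≤ ∫⁻ x in Set.Icc (t - δ) t ∩ Set.Ioc 0 t,
          ENNReal.ofReal (t ^ γ) * ENNReal.ofReal ((t - x) ^ (-b)) := by
          refine setLIntegral_mono' (measurableSet_Icc.inter measurableSet_Ioc) fun x hx => ?_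
          rw [← ENNReal.ofReal_mul (by positivity), mul_comm]
          have : 0 ≤ t - x := sub_nonneg.2 hx.1.2
          exact ENNReal.ofReal_le_ofReal (mul_le_mul_of_nonneg_right
            (Real.rpow_le_rpow hx.2.1.le hx.2.2 hγ0) (by positivity))
      _ ≤ ∫⁻ x in Set.Icc (t - δ) t, ENNReal.ofReal (t ^ γ) * ENNReal.ofReal ((t - x) ^ (-b)) :=
          lintegral_mono_set Set.inter_subset_left
      _ = _ := by
          rw [lintegral_const_mul' _ _ ENNReal.ofReal_ne_top,
            lintegral_Icc_sub_left_rpow (by linarith) hδ0.le,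
            ← ENNReal.ofReal_mul (by positivity)]
  have h2 : ∫⁻ x in Set.Ioc 0 t ∩ Set.Iic (t - δ), ENNReal.ofReal ((t - x) ^ (-b) * x ^ γ) ≤
      ENNReal.ofReal (δ ^ (-b) * (t ^ (γ + 1) / (γ + 1))) := by
    calc _ ≤ ∫⁻ x in Set.Ioc 0 t ∩ Set.Iic (t - δ),
          ENNReal.ofReal (δ ^ (-b)) * ENNReal.ofReal (x ^ γ) := by
          refine setLIntegral_mono' (measurableSet_Ioc.inter measurableSet_Iic) fun x hx => ?_
          rw [← ENNReal.ofReal_mul (by positivity)]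
          have hx2 : x ≤ t - δ := hx.2
          exact ENNReal.ofReal_le_ofReal (mul_le_mul_of_nonneg_right
            (Real.rpow_le_rpow_of_nonpos hδ0 (by linarith) (by linarith))
            (Real.rpow_nonneg hx.1.1.le _))
      _ ≤ ∫⁻ x in Set.Ioc 0 t, ENNReal.ofReal (δ ^ (-b)) * ENNReal.ofReal (x ^ γ) :=
          lintegral_mono_set Set.inter_subset_left
      _ = _ := by
          rw [lintegral_const_mul' _ _ ENNReal.ofReal_ne_top,
            lintegral_Ioc_rpow (by linarith) ht.le, ← ENNReal.ofReal_mul (by positivity)]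
  refine (add_le_add h1 h2).trans ?_
  have hb'' : 0 < -b + 1 := by linarith
  rw [← ENNReal.ofReal_add (by positivity) (by positivity)]
  refine ENNReal.ofReal_le_ofReal ?_
  set M : ℝ := ((n : ℝ) + 1) ^ (b - 1) * t ^ (((n : ℝ) + 1) * (1 - b)) with hM
  have hM0 : 0 ≤ M := by positivity
  have e1 : t ^ γ * δ ^ (-b + 1) = M := by
    rw [hδ, Real.div_rpow ht.le hn.le, hM, show b - 1 = -(-b + 1) by ring, Real.rpow_neg hn.le,
      show ((n : ℝ) + 1) * (1 - b) = γ + (-b + 1) by rw [hγ]; ring, Real.rpow_add ht γ]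
    ring
  have e2 : δ ^ (-b) * t ^ (γ + 1) = ((n : ℝ) + 1) * M := by
    rw [hδ, Real.div_rpow ht.le hn.le, hM, Real.rpow_sub_one hn.ne', Real.rpow_neg hn.le,
      show ((n : ℝ) + 1) * (1 - b) = -b + (γ + 1) by rw [hγ]; ring, Real.rpow_add ht (-b),
      show ((n : ℝ) + 1) ^ b = (((n : ℝ) + 1) ^ (-b))⁻¹ by rw [Real.rpow_neg hn.le, inv_inv],
      Real.rpow_neg hn.le]
    field_simp
  have e3 : ((n : ℝ) + 1) * (1 - b) ≤ γ + 1 := by rw [hγ]; linarith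
  calc t ^ γ * (δ ^ (-b + 1) / (-b + 1)) + δ ^ (-b) * (t ^ (γ + 1) / (γ + 1))
      = M / (1 - b) + ((n : ℝ) + 1) * M / (γ + 1) := by
        rw [← mul_div_assoc, ← mul_div_assoc, e1, e2, show -b + 1 = 1 - b by ring]
    _ ≤ M / (1 - b) + ((n : ℝ) + 1) * M / (((n : ℝ) + 1) * (1 - b)) := by gcongr
    _ = 2 / (1 - b) * ((n : ℝ) + 1) ^ (b - 1) * t ^ (((n : ℝ) + 1) * (1 - b)) := by
        rw [mul_div_mul_left _ _ hn.ne', mul_assoc, ← hM]; ring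

theorem lintegral_gapProd_succ_le {b t : ℝ} (n : ℕ) :
    ∫⁻ v in Set.Icc (0 : Fin (n + 1) → ℝ) (fun _ => t), ENNReal.ofReal (gapProd t v ^ (-b)) ≤
      ((n + 1 : ℕ) : ℝ≥0∞) * ∫⁻ x in Set.Ioc 0 t, ENNReal.ofReal ((t - x) ^ (-b)) *
        ∫⁻ u in Set.Icc (0 : Fin n → ℝ) (fun _ => x), ENNReal.ofReal (gapProd x u ^ (-b)) := by
  let B : Set (ℝ × (Fin n → ℝ)) := {z | z.1 ∈ Set.Icc 0 t ∧ ∀ j, z.2 j ∈ Set.Icc 0 z.1}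
  have hB : MeasurableSet B := by
    have : B = {z | 0 ≤ z.1} ∩ {z | z.1 ≤ t} ∩ ⋂ j, ({z | 0 ≤ z.2 j} ∩ {z | z.2 j ≤ z.1}) := by
      ext z; simp [B]
    rw [this]
    refine ((measurableSet_le measurable_const measurable_fst).inter
      (measurableSet_le measurable_fst measurable_const)).inter (MeasurableSet.iInter fun j => ?_)
    exact (measurableSet_le (by fun_prop) (by fun_prop)).inter
      (measurableSet_le (by fun_prop) (by fun_prop))
  let e : Fin (n + 1) → (Fin (n + 1) → ℝ) ≃ᵐ ℝ × (Fin n → ℝ) := fun i =>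
    MeasurableEquiv.piFinSuccAbove (fun _ => ℝ) i
  have he : ∀ i v, e i v = (v i, fun j => v (i.succAbove j)) := fun i v => rfl
  have hcover : Set.Icc (0 : Fin (n + 1) → ℝ) (fun _ => t) ⊆ ⋃ i, e i ⁻¹' B := by
    intro v hv
    obtain ⟨i, hi⟩ := Finite.exists_max v
    exact Set.mem_iUnion.2 ⟨i, ⟨hv.1 i, hv.2 i⟩, fun j => ⟨hv.1 _, hi _⟩⟩
  have hpiece : ∀ i, ∫⁻ v in e i ⁻¹' B, ENNReal.ofReal (gapProd t v ^ (-b)) ≤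
      ∫⁻ x in Set.Ioc 0 t, ENNReal.ofReal ((t - x) ^ (-b)) *
        ∫⁻ u in Set.Icc (0 : Fin n → ℝ) (fun _ => x), ENNReal.ofReal (gapProd x u ^ (-b)) := by
    intro i
    let F : ℝ × (Fin n → ℝ) → ℝ≥0∞ := fun z =>
      ENNReal.ofReal ((t - z.1) ^ (-b)) * ENNReal.ofReal (gapProd z.1 z.2 ^ (-b))
    calc ∫⁻ v in e i ⁻¹' B, ENNReal.ofReal (gapProd t v ^ (-b))
        = ∫⁻ v in e i ⁻¹' B, F (e i v) := by
          refine setLIntegral_congr_fun ((e i).measurable hB) fun v hv => ?_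
          have h1 : v i ∈ Set.Icc 0 t := hv.1
          have h2 : ∀ j, v (i.succAbove j) ≤ v i := fun j => (hv.2 j).2
          simp only [F, he, gapProd_eq_mul_of_forall_le t v i h2]
          rw [Real.mul_rpow (sub_nonneg.2 h1.2) (gapProd_nonneg h2),
            ENNReal.ofReal_mul (Real.rpow_nonneg (sub_nonneg.2 h1.2) _)]
      _ = ∫⁻ z in B, F z :=
          (volume_preserving_piFinSuccAbove (fun _ => ℝ) i).setLIntegral_comp_preimage_emb
            (e i).measurableEmbedding F B
      _ = ∫⁻ z, B.indicator F z := (lintegral_indicator hB F).symm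
      _ ≤ ∫⁻ x, ∫⁻ u, B.indicator F (x, u) := lintegral_prod_le _
      _ = ∫⁻ x, (Set.Icc 0 t).indicator (fun x => ENNReal.ofReal ((t - x) ^ (-b)) *
            ∫⁻ u in Set.Icc (0 : Fin n → ℝ) (fun _ => x),
              ENNReal.ofReal (gapProd x u ^ (-b))) x := by
          refine lintegral_congr fun x => ?_
          by_cases hx : x ∈ Set.Icc 0 t
          · rw [Set.indicator_of_mem hx, ← lintegral_const_mul' _ _ ENNReal.ofReal_ne_top,
              ← lintegral_indicator measurableSet_Icc]
            refine lintegral_congr fun u => ?_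
            have hiff : (x, u) ∈ B ↔ u ∈ Set.Icc (0 : Fin n → ℝ) (fun _ => x) :=
              ⟨fun h => ⟨fun j => (h.2 j).1, fun j => (h.2 j).2⟩,
                fun h => ⟨hx, fun j => ⟨h.1 j, h.2 j⟩⟩⟩
            by_cases hu : (x, u) ∈ B
            · rw [Set.indicator_of_mem hu, Set.indicator_of_mem (hiff.1 hu)]
            · rw [Set.indicator_of_notMem hu, Set.indicator_of_notMem (mt hiff.2 hu)]
          · rw [Set.indicator_of_notMem hx, ← lintegral_zero]
            refine lintegral_congr fun u => Set.indicator_of_notMem (fun h => hx h.1) _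
      _ = _ := by
          rw [lintegral_indicator measurableSet_Icc, setLIntegral_congr Ioc_ae_eq_Icc.symm]
  calc _ ≤ _ := lintegral_mono_set hcover
    _ ≤ ∑' i, ∫⁻ v in e i ⁻¹' B, ENNReal.ofReal (gapProd t v ^ (-b)) := lintegral_iUnion_le _ _
    _ ≤ _ := by
      rw [tsum_fintype]
      refine (Finset.sum_le_card_nsmul _ _ _ fun i _ => hpiece i).trans (le_of_eq ?_)
      rw [Finset.card_univ, Fintype.card_fin, nsmul_eq_mul]

theorem lintegral_gapProd_rpow_le {b : ℝ} (hb0 : 0 ≤ b) (hb1 : b < 1) (n : ℕ) {t : ℝ}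
    (ht : 0 < t) :
    ∫⁻ v in Set.Icc (0 : Fin n → ℝ) (fun _ => t), ENNReal.ofReal (gapProd t v ^ (-b)) ≤
      ENNReal.ofReal ((2 / (1 - b)) ^ n * (n ! : ℝ) ^ b * t ^ (n * (1 - b))) := by
  have hb' : 0 < 1 - b := by linarith
  induction n generalizing t with
  | zero =>
    have : Set.Icc (0 : Fin 0 → ℝ) (fun _ => t) = Set.univ := by
      ext v; simp [Subsingleton.elim v 0]
    rw [this, Measure.restrict_univ]
    simp [gapProd, volume_pi]
  | succ n ih =>
    have hn : (0 : ℝ) < (n : ℝ) + 1 := by positivity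
    refine (lintegral_gapProd_succ_le n).trans ?_
    calc _ ≤ ((n + 1 : ℕ) : ℝ≥0∞) * ∫⁻ x in Set.Ioc 0 t,
          ENNReal.ofReal ((2 / (1 - b)) ^ n * (n ! : ℝ) ^ b) *
            ENNReal.ofReal ((t - x) ^ (-b) * x ^ (n * (1 - b))) := by
          refine mul_le_mul_right ?_ _
          refine setLIntegral_mono' measurableSet_Ioc fun x hx => ?_
          have hx0 : 0 ≤ t - x := sub_nonneg.2 hx.2
          refine (mul_le_mul_right (ih hx.1) _).trans (le_of_eq ?_)
          rw [← ENNReal.ofReal_mul (by positivity), ← ENNReal.ofReal_mul (by positivity)]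
          congr 1
          ring
      _ ≤ ENNReal.ofReal ((n : ℝ) + 1) * (ENNReal.ofReal ((2 / (1 - b)) ^ n * (n ! : ℝ) ^ b) *
          ENNReal.ofReal
            (2 / (1 - b) * ((n : ℝ) + 1) ^ (b - 1) * t ^ (((n : ℝ) + 1) * (1 - b)))) := by
          rw [lintegral_const_mul' _ _ ENNReal.ofReal_ne_top,
            ← ENNReal.ofReal_natCast (n + 1), Nat.cast_add_one]
          gcongr
          exact lintegral_beta_le hb0 hb1 ht n
      _ = _ := by
          rw [← ENNReal.ofReal_mul (by positivity), ← ENNReal.ofReal_mul (by positivity)]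
          congr 1
          rw [Nat.factorial_succ, Nat.cast_mul, Nat.cast_add_one,
            Real.mul_rpow hn.le (by positivity), Real.rpow_sub_one hn.ne', pow_succ]
          field_simp

/-- For nonnegative `x` and `y`, the power `-q` of `x * y` is at most the sum of the
powers `-2q` of `x` and `y`. -/
theorem mul_rpow_neg_le_add {x y : ℝ} (hx : 0 ≤ x) (hy : 0 ≤ y) (q : ℝ) :
    (x * y) ^ (-q) ≤ x ^ (-(2 * q)) + y ^ (-(2 * q)) := by
  have h : ∀ z : ℝ, 0 ≤ z → z ^ (-(2 * q)) = (z ^ (-q)) ^ 2 := fun z hz => by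
    rw [← Real.rpow_mul_natCast hz]; congr 1; push_cast; ring
  rw [Real.mul_rpow hx hy, h x hx, h y hy]
  nlinarith [sq_nonneg (x ^ (-q) - y ^ (-q)), sq_nonneg (x ^ (-q)), sq_nonneg (y ^ (-q))]

theorem lintegral_Icc_prod_abs_sub_rpow_le {n : ℕ} {p t : ℝ} (hp : -1 < p) {x : Fin n → ℝ}
    (hx : x ∈ Set.Icc (0 : Fin n → ℝ) (fun _ => t)) :
    ∫⁻ s in Set.Icc (0 : Fin n → ℝ) (fun _ => t), ENNReal.ofReal (∏ j, |x j - s j| ^ p) ≤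
      ENNReal.ofReal (2 / (p + 1) * t ^ (p + 1)) ^ n := by
  have hIcc : Set.Icc (0 : Fin n → ℝ) (fun _ => t) = Set.univ.pi fun _ => Set.Icc 0 t :=
    (Set.pi_univ_Icc _ _).symm
  rw [hIcc, volume_pi, Measure.restrict_pi_pi]
  simp_rw [ENNReal.ofReal_prod_of_nonneg
    (fun j _ => Real.rpow_nonneg (abs_nonneg (x j - _)) p)]
  rw [lintegral_pi_fin_prod _ (f := fun j s => ENNReal.ofReal (|x j - s| ^ p))
    (fun j => by fun_prop)]
  refine (Finset.prod_le_prod' fun j _ =>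
    lintegral_Icc_abs_sub_rpow_le hp ⟨hx.1 j, hx.2 j⟩).trans (le_of_eq ?_)
  simp

theorem lintegral_kernel_mul_gapProd_le {n : ℕ} {p q t : ℝ} (hp : -1 < p) :
    ∫⁻ z in (Set.Icc (0 : Fin n → ℝ) (fun _ => t)) ×ˢ (Set.Icc (0 : Fin n → ℝ) (fun _ => t)),
        ENNReal.ofReal ((∏ j, |z.1 j - z.2 j| ^ p) * (gapProd t z.1 * gapProd t z.2) ^ (-q)) ≤
      2 * (ENNReal.ofReal (2 / (p + 1) * t ^ (p + 1)) ^ n *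
        ∫⁻ v in Set.Icc (0 : Fin n → ℝ) (fun _ => t),
          ENNReal.ofReal (gapProd t v ^ (-(2 * q)))) := by
  set S : Set (Fin n → ℝ) := Set.Icc 0 (fun _ => t) with hS
  have hSm : MeasurableSet S := measurableSet_Icc
  let K : (Fin n → ℝ) × (Fin n → ℝ) → ℝ≥0∞ := fun z =>
    ENNReal.ofReal (∏ j, |z.1 j - z.2 j| ^ p)
  let g : (Fin n → ℝ) → ℝ≥0∞ := fun v => ENNReal.ofReal (gapProd t v ^ (-(2 * q)))
  have hK : Measurable K := by
    refine (Finset.measurable_prod _ fun j _ => ?_).ennreal_ofReal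
    fun_prop
  have hg : Measurable g := ((measurable_gapProd t).pow_const _).ennreal_ofReal
  have hfirst : ∫⁻ z, g z.1 * K z ∂(volume.restrict S).prod (volume.restrict S) ≤
      ENNReal.ofReal (2 / (p + 1) * t ^ (p + 1)) ^ n * ∫⁻ v in S, g v := by
    refine (lintegral_prod_le _).trans ?_
    rw [mul_comm, ← lintegral_mul_const _ hg]
    refine setLIntegral_mono' hSm fun x hx => ?_
    refine (lintegral_const_mul' (g x) _ ENNReal.ofReal_ne_top).trans_le ?_
    gcongr
    exact lintegral_Icc_prod_abs_sub_rpow_le hp hx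
  have hsecond : ∫⁻ z, g z.2 * K z ∂(volume.restrict S).prod (volume.restrict S) =
      ∫⁻ z, g z.1 * K z ∂(volume.restrict S).prod (volume.restrict S) := by
    rw [← lintegral_prod_swap]
    refine lintegral_congr fun z => ?_
    simp only [K, Prod.fst_swap, Prod.snd_swap, abs_sub_comm]
  calc _ ≤ ∫⁻ z in S ×ˢ S, (g z.1 * K z + g z.2 * K z) := by
        refine setLIntegral_mono' (hSm.prod hSm) fun z hz => ?_
        have hA := gapProd_nonneg (fun i => hz.1.2 i : ∀ i, z.1 i ≤ t)
        have hB := gapProd_nonneg (fun i => hz.2.2 i : ∀ i, z.2 i ≤ t)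
        have hprod : 0 ≤ ∏ j, |z.1 j - z.2 j| ^ p :=
          Finset.prod_nonneg fun j _ => Real.rpow_nonneg (abs_nonneg _) _
        rw [← add_mul, ← ENNReal.ofReal_add (Real.rpow_nonneg hA _) (Real.rpow_nonneg hB _),
          mul_comm, ENNReal.ofReal_mul (Real.rpow_nonneg (mul_nonneg hA hB) _)]
        gcongr
        exact mul_rpow_neg_le_add hA hB q
    _ = ∫⁻ z, (g z.1 * K z + g z.2 * K z) ∂(volume.restrict S).prod (volume.restrict S) := by
        rw [Measure.prod_restrict, ← Measure.volume_eq_prod]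
    _ ≤ _ := by
        rw [lintegral_add_left (by fun_prop), hsecond, ← two_mul]
        gcongr

/-- For `H ∈ (1/2,1)`, `α_H = H(2H-1)` and `a ∈ [0,2)`, there is `c > 0` (depending only on `H`
and `a`) such that for all `n ≥ 1` and `t > 0`,
`α_Hⁿ ∫_{[0,t]^{2n}} ∏_j |t_j-s_j|^{2H-2} (β(𝐭)β(𝐬))^{-a/4} d𝐭 d𝐬
  ≤ cⁿ (n!)^{a/2} t^{(4H-a)n/2}`. -/
theorem stmt_14 (H : ℝ) (hH : H ∈ Set.Ioo (1 / 2 : ℝ) 1) (a : ℝ) (ha : a ∈ Set.Ico (0 : ℝ) 2) :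
    ∃ c : ℝ, 0 < c ∧ ∀ n : ℕ, 1 ≤ n → ∀ t : ℝ, 0 < t →
      ENNReal.ofReal (H * (2 * H - 1)) ^ n *
        ∫⁻ p in (Set.Icc (0 : Fin n → ℝ) (fun _ => t)) ×ˢ
            (Set.Icc (0 : Fin n → ℝ) (fun _ => t)),
          ENNReal.ofReal ((∏ j : Fin n, |p.1 j - p.2 j| ^ (2 * H - 2)) *
            (gapProd t p.1 * gapProd t p.2) ^ (-(a / 4))) ≤
      ENNReal.ofReal (c ^ n * (n ! : ℝ) ^ (a / 2) * t ^ ((4 * H - a) * n / 2)) := by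
  obtain ⟨hH1, hH2⟩ := hH
  obtain ⟨ha0, ha2⟩ := ha
  have hb : 0 < 1 - a / 2 := by linarith
  have hH0 : 0 < 2 * H - 1 := by linarith
  refine ⟨8 * H / (1 - a / 2), by positivity, fun n hn t ht => ?_⟩
  have h1 := lintegral_kernel_mul_gapProd_le (n := n) (p := 2 * H - 2) (q := a / 4) (t := t)
    (by linarith)
  have h2 := lintegral_gapProd_rpow_le (b := a / 2) (by linarith) (by linarith) n ht
  rw [show 2 * (a / 4) = a / 2 by ring, show 2 * H - 2 + 1 = 2 * H - 1 by ring] at h1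
  refine (mul_le_mul_right (h1.trans (mul_le_mul_right (mul_le_mul_right h2 _) _)) _).trans ?_
  have h2n : (2 : ℝ) ≤ 2 ^ n := le_self_pow₀ (by norm_num) (by omega)
  rw [← ENNReal.ofReal_pow (by positivity), ← ENNReal.ofReal_pow (by positivity),
    ← ENNReal.ofReal_ofNat 2, ← ENNReal.ofReal_mul (by positivity),
    ← ENNReal.ofReal_mul (by positivity), ← ENNReal.ofReal_mul (by positivity)]
  refine ENNReal.ofReal_le_ofReal ?_
  have ht' : (t ^ (2 * H - 1)) ^ n * t ^ (n * (1 - a / 2)) = t ^ ((4 * H - a) * n / 2) := by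
    rw [← Real.rpow_mul_natCast ht.le, ← Real.rpow_add ht]
    congr 1
    ring
  have hc : (H * (2 * H - 1)) ^ n * (2 / (2 * H - 1)) ^ n * (2 / (1 - a / 2)) ^ n * 2 ^ n =
      (8 * H / (1 - a / 2)) ^ n := by
    have hH' : H * (2 * H - 1) * (2 / (2 * H - 1)) = 2 * H := by
      rw [mul_assoc, mul_div_cancel₀ _ hH0.ne', mul_comm]
    rw [← mul_pow, ← mul_pow, ← mul_pow, hH']
    congr 1
    ring
  rw [← ht', ← hc, mul_pow (2 / (2 * H - 1))]
  calc _ = (H * (2 * H - 1)) ^ n * (2 / (2 * H - 1)) ^ n * (2 / (1 - a / 2)) ^ n * 2 *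
        (n ! : ℝ) ^ (a / 2) * ((t ^ (2 * H - 1)) ^ n * t ^ (n * (1 - a / 2))) := by ring
    _ ≤ _ := by gcongr
end

section
/- For every a ∈ (0,1) and every η ∈ ℝ, ∫_{ℝ} |ξ|^{a-1}/(1 + (ξ - η)²) dξ ≤ ∫_{ℝ} |ξ|^{a-1}/(1 + ξ²) dξ. In particular, sup_{η ∈ ℝ} ∫_{ℝ} |ξ|^{a-1}/(1 + (ξ - η)²) dξ = ∫_{ℝ} |ξ|^{a-1}/(1 + ξ²) dξ. -/
open MeasureTheory

/-- Two functions that are antitone in `|x|` vary in the same direction. -/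
theorem abs_rpow_sub_mul_inv_sub_nonneg {r : ℝ} (hr : r ≤ 0) {x y : ℝ} (hx : x ≠ 0) (hy : y ≠ 0) :
    0 ≤ (|x| ^ r - |y| ^ r) * ((1 + x ^ 2)⁻¹ - (1 + y ^ 2)⁻¹) := by
  wlog h : |x| ≤ |y| generalizing x y
  · linarith [this hy hx (le_of_not_ge h)]
  · refine mul_nonneg (sub_nonneg.2 (Real.rpow_le_rpow_of_nonpos (abs_pos.2 hx) h hr))
      (sub_nonneg.2 (inv_anti₀ (by positivity) ?_))
    linarith [sq_le_sq.2 h]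

theorem integrableOn_abs_rpow {r : ℝ} (hr : -1 < r) :
    IntegrableOn (fun x : ℝ => |x| ^ r) (Set.Icc (-1) 1) := by
  have h1 : IntegrableOn (fun x : ℝ => |x| ^ r) (Set.Ioc 0 1) := by
    have := (intervalIntegral.intervalIntegrable_rpow' (a := 0) (b := 1) hr).1
    refine this.congr_fun (fun x hx => ?_) measurableSet_Ioc
    simp only [abs_of_pos hx.1]
  have h2 : IntervalIntegrable (fun x : ℝ => |x| ^ r) volume 0 1 :=
    (intervalIntegrable_iff_integrableOn_Ioc_of_le zero_le_one).2 h1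
  have h3 : IntervalIntegrable (fun x : ℝ => |x| ^ r) volume (-1) 0 := by
    simpa using ((IntervalIntegrable.iff_comp_neg (f := fun x : ℝ => |x| ^ r)).1 h2).symm
  exact (intervalIntegrable_iff_integrableOn_Icc_of_le (by norm_num)).1 (h3.trans h2)

theorem integrable_abs_rpow_div_one_add_sq {r : ℝ} (hr : -1 < r) (hr' : r ≤ 0) (η : ℝ) :
    Integrable fun ξ : ℝ => |ξ| ^ r / (1 + (ξ - η) ^ 2) := by
  have hdom : Integrable fun ξ : ℝ =>
      (Set.Icc (-1) 1).indicator (fun x : ℝ => |x| ^ r) ξ + (1 + (ξ - η) ^ 2)⁻¹ :=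
    ((integrable_indicator_iff measurableSet_Icc).2 (integrableOn_abs_rpow hr)).add
      (integrable_inv_one_add_sq.comp_sub_right η)
  refine hdom.mono' (Measurable.aestronglyMeasurable (by fun_prop)) (.of_forall fun ξ => ?_)
  have hpos : 0 ≤ |ξ| ^ r := by positivity
  have hinv : 0 ≤ (1 + (ξ - η) ^ 2)⁻¹ := by positivity
  rw [Real.norm_of_nonneg (by positivity), div_eq_mul_inv]
  by_cases h : ξ ∈ Set.Icc (-1 : ℝ) 1
  · rw [Set.indicator_of_mem h]
    have : (1 + (ξ - η) ^ 2)⁻¹ ≤ 1 := inv_le_one_of_one_le₀ (by nlinarith [sq_nonneg (ξ - η)])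
    nlinarith
  · rw [Set.indicator_of_notMem h]
    have : |ξ| ^ r ≤ 1 :=
      Real.rpow_le_one_of_one_le_of_nonpos (not_lt.1 fun h' => h (abs_le.1 h'.le)) hr'
    nlinarith

theorem integral_abs_rpow_div_one_add_sub_sq_le {r : ℝ} (hr : -1 < r) (hr' : r ≤ 0) (η : ℝ) :
    ∫ ξ : ℝ, |ξ| ^ r / (1 + (ξ - η) ^ 2) ≤ ∫ ξ : ℝ, |ξ| ^ r / (1 + ξ ^ 2) := by
  have hη := integrable_abs_rpow_div_one_add_sq hr hr' η
  have h0 : Integrable fun ξ : ℝ => |ξ| ^ r / (1 + ξ ^ 2) := by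
    simpa using integrable_abs_rpow_div_one_add_sq hr hr' 0
  have hrefl : (fun ξ : ℝ => |η - ξ| ^ r / (1 + (η - ξ - η) ^ 2)) =
      fun ξ : ℝ => |ξ - η| ^ r / (1 + ξ ^ 2) := by
    funext ξ
    rw [abs_sub_comm, show (η - ξ - η) ^ 2 = ξ ^ 2 by ring]
  have hη' : Integrable fun ξ : ℝ => |ξ - η| ^ r / (1 + ξ ^ 2) := hrefl ▸ hη.comp_sub_left η
  have eη' : ∫ ξ : ℝ, |ξ - η| ^ r / (1 + ξ ^ 2) = ∫ ξ : ℝ, |ξ| ^ r / (1 + (ξ - η) ^ 2) := by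
    rw [← integral_sub_left_eq_self (fun ξ : ℝ => |ξ| ^ r / (1 + (ξ - η) ^ 2)) volume η, hrefl]
  have h0' : Integrable fun ξ : ℝ => |ξ - η| ^ r / (1 + (ξ - η) ^ 2) := h0.comp_sub_right η
  have e0' : ∫ ξ : ℝ, |ξ - η| ^ r / (1 + (ξ - η) ^ 2) = ∫ ξ : ℝ, |ξ| ^ r / (1 + ξ ^ 2) :=
    integral_sub_right_eq_self (fun ξ : ℝ => |ξ| ^ r / (1 + ξ ^ 2)) η
  have key : ∫ ξ : ℝ, (|ξ| ^ r / (1 + (ξ - η) ^ 2) + |ξ - η| ^ r / (1 + ξ ^ 2)) ≤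
      ∫ ξ : ℝ, (|ξ| ^ r / (1 + ξ ^ 2) + |ξ - η| ^ r / (1 + (ξ - η) ^ 2)) := by
    refine integral_mono_ae (hη.add hη') (h0.add h0') ?_
    filter_upwards [volume.ae_ne 0, volume.ae_ne η] with ξ hξ hξη
    have := abs_rpow_sub_mul_inv_sub_nonneg hr' hξ (sub_ne_zero.2 hξη)
    simp only [div_eq_mul_inv]
    linarith
  rw [integral_add hη hη', integral_add h0 h0', eη', e0'] at key
  linarith

/-- For `a ∈ (0,1)`: for every `η ∈ ℝ`, `∫ |ξ|^{a-1}/(1+(ξ-η)²) dξ ≤ ∫ |ξ|^{a-1}/(1+ξ²) dξ`,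
and consequently `sup_η ∫ |ξ|^{a-1}/(1+(ξ-η)²) dξ = ∫ |ξ|^{a-1}/(1+ξ²) dξ`. -/
theorem stmt_15 (a : ℝ) (ha : a ∈ Set.Ioo (0 : ℝ) 1) :
    (∀ η : ℝ, (∫ ξ : ℝ, |ξ| ^ (a - 1) / (1 + (ξ - η) ^ 2)) ≤
      ∫ ξ : ℝ, |ξ| ^ (a - 1) / (1 + ξ ^ 2)) ∧
    (⨆ η : ℝ, ∫ ξ : ℝ, |ξ| ^ (a - 1) / (1 + (ξ - η) ^ 2)) =
      ∫ ξ : ℝ, |ξ| ^ (a - 1) / (1 + ξ ^ 2) := by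
  have hle := integral_abs_rpow_div_one_add_sub_sq_le (r := a - 1) (by linarith [ha.1])
    (by linarith [ha.2])
  refine ⟨hle, le_antisymm (ciSup_le hle) ?_⟩
  simpa using le_ciSup ⟨_, Set.forall_mem_range.2 hle⟩ (0 : ℝ)
end
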